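/- arXiv:2603.15854 — 2 statements merged into one kernel-verified Lean document; each statement's English description precedes it below -/
import Mathlib

section
/- (Exactness of sequential/online hierarchical sampling.) Let V ≥ 1, let ℓ ∈ ℝ^V, and let G_0, …, G_{m-1} be a partition of {1, …, V} into nonempty sets with group log-masses L_k = log Σ_{j∈G_k} exp(ℓ_j). Let Z_0, …, Z_{m-1}, U_1, …, U_{m-1} be mutually independent random variables such that each Z_k is distributed according to the softmax of ℓ restricted to G_k and each U_k is uniform on (0,1). Define recursively W_0 = Z_0 and, for 1 ≤ k ≤ m-1, W_k = Z_k if U_k < exp(L_k)/(Σ_{s=0}^{k} exp(L_s)) and W_k = W_{k-1} otherwise. Then W_{m-1} is distributed according to softmax(ℓ); that is, for every i ∈ {1, …, V}, P(W_{m-1} = i) = exp(ℓ_i) / Σ_{j=1}^V exp(ℓ_j). -/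
open MeasureTheory

/-- Product rule on rays upgrades to the product rule on measurable sets. -/
lemma rays_to_sets {Ω κ : Type*} [MeasurableSpace Ω] [DecidableEq κ] (P : Measure Ω)
    [IsProbabilityMeasure P] (T : Finset κ) (A : Set Ω) (hA : MeasurableSet A)
    (c : ENNReal) (hc : c ≠ ⊤)
    (U : κ → Ω → ℝ) (hU : ∀ k, Measurable (U k))
    (h : ∀ t : κ → ℝ, P {ω | ω ∈ A ∧ ∀ k ∈ T, U k ω ≤ t k}
      = c * ∏ k ∈ T, P {ω | U k ω ≤ t k})
    (S : Finset κ) : ∀ (B : κ → Set ℝ), (∀ k, MeasurableSet (B k)) →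
      (∀ k, k ∉ S → ∃ t, B k = Set.Iic t) →
      P {ω | ω ∈ A ∧ ∀ k ∈ T, U k ω ∈ B k} = c * ∏ k ∈ T, P {ω | U k ω ∈ B k} := by
  induction S using Finset.induction_on with
  | empty =>
    intro B _ hB
    choose t ht using fun k => hB k (by simp)
    have := h t
    simpa [ht] using this
  | insert a S ha ih =>
    intro B hBm hB
    by_cases haT : a ∈ T
    · set E : Set Ω := {ω | ω ∈ A ∧ ∀ k ∈ T.erase a, U k ω ∈ B k} with hE
      have key : (P.restrict E).map (U a)
          = (c * ∏ k ∈ T.erase a, P {ω | U k ω ∈ B k}) • P.map (U a) := by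
        have hfin : (c * ∏ k ∈ T.erase a, P {ω | U k ω ∈ B k}) ≠ ⊤ :=
          ENNReal.mul_ne_top hc (ENNReal.prod_ne_top fun k _ => measure_ne_top _ _)
        haveI : IsFiniteMeasure
            ((c * ∏ k ∈ T.erase a, P {ω | U k ω ∈ B k}) • P.map (U a)) :=
          Measure.smul_finite _ hfin
        apply Measure.ext_of_Iic
        intro x
        have h1 := ih (Function.update B a (Set.Iic x)) (by
          intro k
          by_cases hk : k = a
          · subst hk; simpa using measurableSet_Iic
          · simpa [hk] using hBm k) (by
          intro k hk
          by_cases hka : k = a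
          · subst hka; exact ⟨x, by simp⟩
          · simpa [hka] using hB k (by simp [hka, hk]))
        rw [Measure.map_apply (hU a) measurableSet_Iic,
          Measure.restrict_apply (hU a measurableSet_Iic), Measure.smul_apply,
          Measure.map_apply (hU a) measurableSet_Iic, smul_eq_mul]
        rw [← Finset.mul_prod_erase T _ haT] at h1
        have e1 : {ω | ω ∈ A ∧ ∀ k ∈ T, U k ω ∈ Function.update B a (Set.Iic x) k}
            = U a ⁻¹' Set.Iic x ∩ E := by
          ext ω
          simp only [hE, Set.mem_ofPred_eq, Set.mem_inter_iff, Set.mem_preimage]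
          constructor
          · rintro ⟨h1, h2⟩
            refine ⟨by simpa using h2 a haT, h1, fun k hk => ?_⟩
            have := h2 k (Finset.mem_of_mem_erase hk)
            rwa [Function.update_of_ne (Finset.ne_of_mem_erase hk)] at this
          · rintro ⟨h0, h1, h2⟩
            refine ⟨h1, fun k hk => ?_⟩
            by_cases hka : k = a
            · subst hka; simpa using h0
            · rw [Function.update_of_ne hka]
              exact h2 k (Finset.mem_erase.2 ⟨hka, hk⟩)
        have e2 : ∏ k ∈ T.erase a, P {ω | U k ω ∈ Function.update B a (Set.Iic x) k}
            = ∏ k ∈ T.erase a, P {ω | U k ω ∈ B k} := by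
          refine Finset.prod_congr rfl fun k hk => ?_
          rw [Function.update_of_ne (Finset.ne_of_mem_erase hk)]
        rw [e1, e2] at h1
        rw [h1, Function.update_self]
        change c * (P (U a ⁻¹' Set.Iic x) * _) = _
        ring
      have h2 := congrArg (fun μ : Measure ℝ => μ (B a)) key
      simp only [Measure.smul_apply, smul_eq_mul] at h2
      rw [Measure.map_apply (hU a) (hBm a),
          Measure.restrict_apply (hU a (hBm a)), Measure.map_apply (hU a) (hBm a)] at h2
      rw [← Finset.mul_prod_erase T _ haT]
      have e1 : {ω | ω ∈ A ∧ ∀ k ∈ T, U k ω ∈ B k} = U a ⁻¹' (B a) ∩ E := by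
        ext ω
        simp only [hE, Set.mem_ofPred_eq, Set.mem_inter_iff, Set.mem_preimage]
        constructor
        · rintro ⟨h1, h2⟩
          exact ⟨h2 a haT, h1, fun k hk => h2 k (Finset.mem_of_mem_erase hk)⟩
        · rintro ⟨h0, h1, h2⟩
          refine ⟨h1, fun k hk => ?_⟩
          by_cases hka : k = a
          · subst hka; exact h0
          · exact h2 k (Finset.mem_erase.2 ⟨hka, hk⟩)
      rw [e1, h2]
      change _ = c * (P (U a ⁻¹' (B a)) * _)
      ring
    · have h1 := ih (Function.update B a (Set.Iic 0)) (by
          intro k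
          by_cases hk : k = a
          · subst hk; simpa using measurableSet_Iic
          · simpa [hk] using hBm k) (by
          intro k hk
          by_cases hka : k = a
          · subst hka; exact ⟨0, by simp⟩
          · simpa [hka] using hB k (by simp [hka, hk]))
      have hne : ∀ k ∈ T, k ≠ a := fun k hk e => haT (e ▸ hk)
      have e1 : {ω | ω ∈ A ∧ ∀ k ∈ T, U k ω ∈ Function.update B a (Set.Iic 0) k}
          = {ω | ω ∈ A ∧ ∀ k ∈ T, U k ω ∈ B k} := by
        ext ω
        simp only [Set.mem_ofPred_eq]
        refine and_congr_right fun _ => forall₂_congr fun k hk => ?_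
        rw [Function.update_of_ne (hne k hk)]
      have e2 : ∏ k ∈ T, P {ω | U k ω ∈ Function.update B a (Set.Iic 0) k}
          = ∏ k ∈ T, P {ω | U k ω ∈ B k} := by
        refine Finset.prod_congr rfl fun k hk => ?_
        rw [Function.update_of_ne (hne k hk)]
      rwa [e1, e2] at h1

/-- Marginalising the product rule over all but one of the `Z k`. -/
lemma marginal_rays {Ω : Type*} [MeasurableSpace Ω] (P : Measure Ω) [IsProbabilityMeasure P]
    {V m : ℕ} (Z : Fin m → Ω → Fin V) (hZ : ∀ k, Measurable (Z k)) (R : Set Ω)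
    (c : ENNReal)
    (h : ∀ z : Fin m → Fin V, P {ω | (∀ k, Z k ω = z k) ∧ ω ∈ R}
      = (∏ k, P {ω | Z k ω = z k}) * c) (k0 : Fin m) (i : Fin V) :
    P {ω | Z k0 ω = i ∧ ω ∈ R} = P {ω | Z k0 ω = i} * c := by
  classical
  let t : Fin m → Finset (Fin V) := fun k => if k = k0 then {i} else Finset.univ
  have hZm : Measurable (fun ω k => Z k ω) := measurable_pi_iff.2 hZ
  have h1 := sum_measure_preimage_singleton (μ := P.restrict R) (Fintype.piFinset t)
    (f := fun ω k => Z k ω) (fun y _ => hZm (measurableSet_singleton y))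
  have h2 : (fun ω k => Z k ω) ⁻¹' (↑(Fintype.piFinset t) : Set (Fin m → Fin V))
      = Z k0 ⁻¹' {i} := by
    ext ω
    simp only [Set.mem_preimage, Finset.mem_coe, Fintype.mem_piFinset, Set.mem_singleton_iff, t]
    constructor
    · intro h; simpa using h k0
    · intro h k
      by_cases hk : k = k0
      · subst hk; simpa using h
      · simp [hk]
  rw [h2, Measure.restrict_apply (hZ k0 (measurableSet_singleton i))] at h1
  change _ = P {ω | Z k0 ω = i ∧ ω ∈ R} at h1
  rw [← h1]
  have h3 : ∀ z : Fin m → Fin V, (P.restrict R) ((fun ω k => Z k ω) ⁻¹' {z})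
      = (∏ k, P {ω | Z k ω = z k}) * c := by
    intro z
    rw [Measure.restrict_apply (hZm (measurableSet_singleton z)), ← h z]
    congr 1
    ext ω
    simp [funext_iff]
  simp_rw [h3]
  rw [← Finset.sum_mul]
  congr 1
  rw [← Finset.prod_univ_sum t (fun k v => P {ω | Z k ω = v}),
    Finset.prod_eq_single k0]
  · simp [t]
  · intro k _ hk
    simp only [t, hk, if_false]
    have := sum_measure_preimage_singleton (μ := P) (Finset.univ : Finset (Fin V))
      (f := Z k) (fun y _ => hZ k (measurableSet_singleton y))
    simp only [Finset.coe_univ, Set.preimage_univ, measure_univ] at this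
    exact this
  · simp

/-- Telescoping product. -/
lemma telescope (M : ℕ → ℝ) (hM0 : 0 < M 0) (hM : ∀ n, 0 ≤ M n) (k0 : ℕ) (n : ℕ) :
    ∏ k ∈ Finset.range (n + 1), (if k < k0 then (1 : ℝ) else
      if k = k0 then M k / ∑ s ∈ Finset.range (k + 1), M s
      else 1 - M k / ∑ s ∈ Finset.range (k + 1), M s)
    = if k0 ≤ n then M k0 / ∑ s ∈ Finset.range (n + 1), M s else 1 := by
  have hS : ∀ n, 0 < ∑ s ∈ Finset.range (n + 1), M s := by
    intro n
    rw [Finset.sum_range_succ']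
    exact add_pos_of_nonneg_of_pos (Finset.sum_nonneg fun _ _ => hM _) hM0
  induction n with
  | zero =>
    rcases Nat.eq_zero_or_pos k0 with h | h
    · subst h; simp
    · simp [h, h.ne']
  | succ n ih =>
    rw [Finset.prod_range_succ, ih]
    rcases lt_trichotomy k0 (n + 1) with h | h | h
    · have h1 : k0 ≤ n := by omega
      have h2 : ¬ (n + 1 < k0) := by omega
      have h3 : n + 1 ≠ k0 := by omega
      rw [if_pos h1, if_neg h2, if_neg h3, if_pos h.le]
      have := hS n
      have h5 := hS (n + 1)
      have h6 := Finset.sum_range_succ M (n + 1)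
      field_simp
      rw [h6]; ring
    · subst h; simp
    · have h1 : ¬ k0 ≤ n := by omega
      have h2 : ¬ k0 ≤ n + 1 := by omega
      simp [h1, h2, h]

set_option maxHeartbeats 2000000 in
/-- **Exactness of sequential/online hierarchical sampling.** Let `G 0, …, G (m-1)` be
a partition of the index set into nonempty groups with log-masses
`L k = log ∑ j ∈ G k, exp (ℓ j)`. Let `Z 0, …, Z (m-1)` (each distributed as the
softmax of `ℓ` restricted to `G k`) and `U 1, …, U (m-1)` (uniform on `(0,1)`) be
mutually independent (independence expressed by the product rule on point events for
the `Z k` and rays for the `U k`, which characterizes mutual independence here).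
Define `W 0 = Z 0` and, for `1 ≤ k ≤ m-1`,
`W k = Z k` if `U k < exp (L k) / ∑_{s ≤ k} exp (L s)` and `W k = W (k-1)` otherwise.
Then `W (m-1)` is distributed according to `softmax ℓ`. -/
theorem online_hierarchical_sampling_exact
    {Ω : Type*} [MeasurableSpace Ω] {P : Measure Ω} [IsProbabilityMeasure P]
    {V m : ℕ} (hV : 1 ≤ V) (hm : 0 < m) (ℓ : Fin V → ℝ)
    (G : Fin m → Finset (Fin V)) (hGne : ∀ k, (G k).Nonempty)
    (hGdisj : Pairwise fun k l => Disjoint (G k) (G l))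
    (hGcover : ∀ i : Fin V, ∃ k, i ∈ G k)
    (L : Fin m → ℝ) (hL : ∀ k, L k = Real.log (∑ j ∈ G k, Real.exp (ℓ j)))
    (Z : Fin m → Ω → Fin V) (hZmeas : ∀ k, Measurable (Z k))
    (U : Fin m → Ω → ℝ) (hUmeas : ∀ k, Measurable (U k))
    (hZlaw : ∀ k, ∀ i : Fin V, P {ω | Z k ω = i}
      = if i ∈ G k then ENNReal.ofReal (Real.exp (ℓ i) / ∑ j ∈ G k, Real.exp (ℓ j)) else 0)
    (hUlaw : ∀ k : Fin m, k ≠ ⟨0, hm⟩ →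
      Measure.map (U k) P = volume.restrict (Set.Ioo (0 : ℝ) 1))
    (hindep : ∀ (z : Fin m → Fin V) (t : Fin m → ℝ),
      P {ω | (∀ k, Z k ω = z k) ∧ ∀ k : Fin m, k ≠ ⟨0, hm⟩ → U k ω ≤ t k}
        = (∏ k : Fin m, P {ω | Z k ω = z k})
            * ∏ k ∈ Finset.univ.filter (fun k : Fin m => k ≠ ⟨0, hm⟩),
                P {ω | U k ω ≤ t k})
    (W : Fin m → Ω → Fin V)
    (hW0 : ∀ ω, W ⟨0, hm⟩ ω = Z ⟨0, hm⟩ ω)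
    (hWrec : ∀ (k : ℕ) (h : k + 1 < m) (ω : Ω),
      W ⟨k + 1, h⟩ ω =
        if U ⟨k + 1, h⟩ ω <
            Real.exp (L ⟨k + 1, h⟩)
              / ∑ s ∈ Finset.univ.filter (fun s : Fin m => (s : ℕ) ≤ k + 1), Real.exp (L s)
        then Z ⟨k + 1, h⟩ ω
        else W ⟨k, by omega⟩ ω) :
    ∀ i : Fin V, P {ω | W ⟨m - 1, by omega⟩ ω = i}
      = ENNReal.ofReal (Real.exp (ℓ i) / ∑ j : Fin V, Real.exp (ℓ j)) := by
  classical
  intro i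
  obtain ⟨k0, hk0⟩ := hGcover i
  have hMpos : ∀ k, 0 < ∑ j ∈ G k, Real.exp (ℓ j) := fun k =>
    Finset.sum_pos (fun _ _ => Real.exp_pos _) (hGne k)
  have hexpL : ∀ k, Real.exp (L k) = ∑ j ∈ G k, Real.exp (ℓ j) := fun k => by
    rw [hL, Real.exp_log (hMpos k)]
  let M : ℕ → ℝ := fun n => if h : n < m then Real.exp (L ⟨n, h⟩) else 0
  have hM : ∀ n, 0 ≤ M n := by
    intro n
    by_cases h : n < m
    · simp only [M, dif_pos h]; positivity
    · simp [M, dif_neg h]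
  have hM0 : 0 < M 0 := by simp only [M, dif_pos hm]; positivity
  have hMk : ∀ k : Fin m, M k = Real.exp (L k) := fun k => by simp [M]
  have hsum : ∀ k : Fin m, ∑ s ∈ Finset.univ.filter (fun s : Fin m => (s : ℕ) ≤ k),
      Real.exp (L s) = ∑ s ∈ Finset.range ((k : ℕ) + 1), M s := by
    intro k
    refine Finset.sum_bij (fun s _ => (s : ℕ)) ?_ ?_ ?_ ?_
    · intro s hs
      simp only [Finset.mem_filter, Finset.mem_univ, true_and] at hs
      exact Finset.mem_range.2 (by omega)
    · intro a _ b _ h; exact Fin.ext h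
    · intro b hb
      have hb' := Finset.mem_range.1 hb
      exact ⟨⟨b, by omega⟩, Finset.mem_filter.2 ⟨Finset.mem_univ _, Nat.lt_succ_iff.1 hb'⟩, rfl⟩
    · intro s _; exact (hMk s).symm
  have hS : ∀ n, 0 < ∑ s ∈ Finset.range (n + 1), M s := by
    intro n
    rw [Finset.sum_range_succ']
    exact add_pos_of_nonneg_of_pos (Finset.sum_nonneg fun _ _ => hM _) hM0
  let p : ℕ → ℝ := fun k => M k / ∑ s ∈ Finset.range (k + 1), M s
  have hp0 : ∀ k, 0 ≤ p k := fun k => div_nonneg (hM k) (hS k).le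
  have hp1 : ∀ k, p k ≤ 1 := fun k => by
    refine (div_le_one (hS k)).2 ?_
    rw [Finset.sum_range_succ]
    have := Finset.sum_nonneg (s := Finset.range k) (fun s _ => hM s)
    linarith
  let B : Fin m → Set ℝ := fun k => if k < k0 then Set.univ else
    if k = k0 then Set.Iio (p k) else Set.Ici (p k)
  have hBm : ∀ k, MeasurableSet (B k) := by
    intro k
    simp only [B]
    split_ifs
    · exact MeasurableSet.univ
    · exact measurableSet_Iio
    · exact measurableSet_Ici
  let T : Finset (Fin m) := Finset.univ.filter (fun k : Fin m => k ≠ ⟨0, hm⟩)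
  let f : ℕ → ℝ := fun k => if k < (k0 : ℕ) then (1 : ℝ) else
      if k = (k0 : ℕ) then p k else 1 - p k
  have hf0 : ∀ k, 0 ≤ f k := by
    intro k
    simp only [f]
    split_ifs
    · exact zero_le_one
    · exact hp0 k
    · linarith [hp1 k]
  have hrec' : ∀ (k : ℕ) (h : k + 1 < m) (ω : Ω), W ⟨k + 1, h⟩ ω =
      if U ⟨k + 1, h⟩ ω < p (k + 1) then Z ⟨k + 1, h⟩ ω else W ⟨k, by omega⟩ ω := by
    intro k h ω
    rw [hWrec k h ω, hsum ⟨k + 1, h⟩, ← hMk]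
  -- pathwise description of the event
  have hpath : ∀ ω, (∀ k, k ≠ k0 → Z k ω ≠ i) → ∀ (n : ℕ) (h : n < m),
      (W ⟨n, h⟩ ω = i ↔ (k0 : ℕ) ≤ n ∧ Z k0 ω = i ∧
        ∀ k : Fin m, (k : ℕ) ≤ n → k ≠ ⟨0, hm⟩ → U k ω ∈ B k) := by
    intro ω hω n
    induction n with
    | zero =>
      intro h
      rw [hW0]
      by_cases hk : k0 = ⟨0, hm⟩
      · subst hk
        simp only [le_refl, true_and]
        refine ⟨fun h => ⟨h, fun k hk hk' => ?_⟩, fun h => h.1⟩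
        exact absurd (Fin.ext (by simpa using hk)) hk'
      · have h1 := hω ⟨0, hm⟩ (Ne.symm hk)
        have h2 : ¬ (k0 : ℕ) ≤ 0 := fun h => hk (Fin.ext (by simpa using h))
        simp [h1, h2]
    | succ n ih =>
      intro h
      have ih := ih (by omega)
      have hn0 : (⟨n + 1, h⟩ : Fin m) ≠ ⟨0, hm⟩ := by simp
      have hsplit : (∀ k : Fin m, (k : ℕ) ≤ n + 1 → k ≠ ⟨0, hm⟩ → U k ω ∈ B k) ↔
          (∀ k : Fin m, (k : ℕ) ≤ n → k ≠ ⟨0, hm⟩ → U k ω ∈ B k) ∧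
            U ⟨n + 1, h⟩ ω ∈ B ⟨n + 1, h⟩ := by
        constructor
        · intro H
          exact ⟨fun k hk => H k (by omega), H _ le_rfl hn0⟩
        · rintro ⟨H1, H2⟩ k hk hk0
          rcases Nat.lt_or_ge (k : ℕ) (n + 1) with h' | h'
          · exact H1 k (by omega) hk0
          · have : k = ⟨n + 1, h⟩ := Fin.ext (by simp; omega)
            rw [this]; exact H2
      rw [hrec', hsplit]
      rcases lt_trichotomy (k0 : ℕ) (n + 1) with hk | hk | hk
      · have hne : (⟨n + 1, h⟩ : Fin m) ≠ k0 := fun e => by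
          rw [← e] at hk; simp at hk
        have hBe : B ⟨n + 1, h⟩ = Set.Ici (p (n + 1)) := by
          have : ¬ (⟨n + 1, h⟩ : Fin m) < k0 := by
            rw [Fin.lt_def]; simp; omega
          simp only [B, if_neg this, if_neg hne]
        rw [hBe, Set.mem_Ici]
        by_cases hu : U ⟨n + 1, h⟩ ω < p (n + 1)
        · rw [if_pos hu]
          have := hω _ hne
          simp [this, hu]
        · rw [if_neg hu, ih]
          have h1 : (k0 : ℕ) ≤ n := by omega
          have h2 : (k0 : ℕ) ≤ n + 1 := by omega
          simp [h1, h2, not_lt.1 hu]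
      · have hke : k0 = ⟨n + 1, h⟩ := Fin.ext hk
        have hBe : B ⟨n + 1, h⟩ = Set.Iio (p (n + 1)) := by
          simp only [B, hke, lt_irrefl, if_false, if_true]
        have hBlt : ∀ k : Fin m, (k : ℕ) ≤ n → k ≠ ⟨0, hm⟩ → U k ω ∈ B k := by
          intro k hkn _
          have : k < k0 := by rw [Fin.lt_def]; omega
          simp [B, this]
        rw [hBe, Set.mem_Iio]
        by_cases hu : U ⟨n + 1, h⟩ ω < p (n + 1)
        · have hz' : Z ⟨n + 1, h⟩ ω = Z k0 ω := by rw [hke]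
          rw [if_pos hu, hz']
          exact ⟨fun hz => ⟨hk.le, hz, hBlt, hu⟩, fun hz => hz.2.1⟩
        · rw [if_neg hu, ih]
          exact ⟨fun hz => by omega, fun hz => absurd hz.2.2.2 hu⟩
      · have hne : (⟨n + 1, h⟩ : Fin m) ≠ k0 := fun e => by
          rw [← e] at hk; simp at hk
        have h1 : ¬ (k0 : ℕ) ≤ n := by omega
        have h2 : ¬ (k0 : ℕ) ≤ n + 1 := by omega
        have h3 := hω _ hne
        have h4 : W ⟨n, by omega⟩ ω ≠ i := fun e => h1 (ih.1 e).1
        split_ifs <;> simp [h2, h3, h4]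
  have hae : ∀ᵐ ω ∂P, ∀ k, k ≠ k0 → Z k ω ≠ i := by
    rw [ae_all_iff]
    intro k
    by_cases hk : k = k0
    · simp [hk]
    · have h1 : P {ω | Z k ω = i} = 0 := by
        rw [hZlaw, if_neg]
        exact fun hi => Finset.disjoint_left.1 (hGdisj hk) hi hk0
      have : ∀ᵐ ω ∂P, Z k ω ≠ i := by
        rw [ae_iff]; simpa using h1
      filter_upwards [this] with ω hω _ using hω
  have hev : P {ω | W ⟨m - 1, by omega⟩ ω = i}
      = P {ω | ω ∈ {ω | Z k0 ω = i} ∧ ∀ k ∈ T, U k ω ∈ B k} := by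
    apply measure_congr
    filter_upwards [hae] with ω hω
    have := hpath ω hω (m - 1) (by omega)
    apply propext
    change (W ⟨m - 1, _⟩ ω = i) ↔ (Z k0 ω = i ∧ ∀ k ∈ T, U k ω ∈ B k)
    rw [this]
    have hle : ∀ k : Fin m, (k : ℕ) ≤ m - 1 := fun k => by have := k.2; omega
    simp [hle, T]
  have hind := rays_to_sets P T {ω | Z k0 ω = i} (hZmeas k0 (measurableSet_singleton i))
    (P {ω | Z k0 ω = i}) (measure_ne_top _ _) U hUmeas (by
      intro t
      refine marginal_rays P Z hZmeas {ω | ∀ k ∈ T, U k ω ≤ t k}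
        (∏ k ∈ T, P {ω | U k ω ≤ t k}) (fun z => ?_) k0 i
      have := hindep z t
      simpa [T] using this) Finset.univ B hBm (by simp)
  have hPB : ∀ k ∈ T, P {ω | U k ω ∈ B k} = ENNReal.ofReal (f k) := by
    intro k hk
    have hk' : k ≠ ⟨0, hm⟩ := by simpa [T] using hk
    have h1 : P {ω | U k ω ∈ B k} = volume (B k ∩ Set.Ioo (0 : ℝ) 1) := by
      rw [← Measure.restrict_apply (hBm k), ← hUlaw k hk',
        Measure.map_apply (hUmeas k) (hBm k)]
      rfl
    rw [h1]
    rcases lt_trichotomy k k0 with h | h | h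
    · have h' : (k : ℕ) < k0 := h
      simp [B, f, h]
    · subst h
      have : Set.Iio (p k) ∩ Set.Ioo (0 : ℝ) 1 = Set.Ioo 0 (p k) := by
        ext x
        simp only [Set.mem_inter_iff, Set.mem_Iio, Set.mem_Ioo]
        have := hp1 k
        constructor
        · rintro ⟨a, b, c⟩; exact ⟨b, a⟩
        · rintro ⟨a, b⟩; exact ⟨b, a, by linarith⟩
      simp [B, f, this]
    · have h2 : ¬ k < k0 := not_lt.2 h.le
      have h3 : k ≠ k0 := h.ne'
      have h2' : ¬ (k : ℕ) < k0 := h2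
      have h3' : (k : ℕ) ≠ k0 := fun e => h3 (Fin.ext e)
      simp only [B, f, if_neg h2, if_neg h3, if_neg h2', if_neg h3']
      apply le_antisymm
      · refine (measure_mono (t := Set.Icc (p k) 1) ?_).trans (by simp)
        rintro x ⟨a, b⟩
        exact ⟨a, b.2.le⟩
      · refine le_trans (by simp) (measure_mono (s := Set.Ioo (p k) 1) ?_)
        rintro x ⟨a, b⟩
        exact ⟨le_of_lt a, (hp0 k).trans_lt a, b⟩
  have hf00 : f 0 = 1 := by
    simp only [f]
    split_ifs with h1 h2
    · rfl
    · simp [p, hM0.ne']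
    · omega
  have hprod : ∏ k ∈ T, f k = M k0 / ∑ s ∈ Finset.range m, M s := by
    have h1 : ∏ k ∈ T, f k = ∏ k : Fin m, f k := by
      apply Finset.prod_subset (Finset.subset_univ _)
      intro k _ hk
      have : k = ⟨0, hm⟩ := by simpa [T] using hk
      rw [this]; exact hf00
    rw [h1, Fin.prod_univ_eq_prod_range f m]
    have h2 := telescope M hM0 hM k0 (m - 1)
    have h3 : m - 1 + 1 = m := by omega
    rw [h3, if_pos (by have := k0.2; omega)] at h2
    exact h2
  have htot : ∑ s ∈ Finset.range m, M s = ∑ j : Fin V, Real.exp (ℓ j) := by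
    rw [← Fin.sum_univ_eq_sum_range M m]
    simp_rw [hMk, hexpL]
    rw [← Finset.sum_biUnion (fun a _ b _ hab => hGdisj hab)]
    refine Finset.sum_congr ?_ fun _ _ => rfl
    ext j
    simpa using hGcover j
  rw [hev, hind, hZlaw, if_pos hk0, Finset.prod_congr rfl hPB,
    ← ENNReal.ofReal_prod_of_nonneg (f := fun k : Fin m => f k) (fun k _ => hf0 k), hprod, htot,
    ← ENNReal.ofReal_mul (div_nonneg (Real.exp_pos _).le (hMpos k0).le), hMk, hexpL]
  congr 1
  have := hMpos k0
  field_simp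
end

section
/- (Distributed sampling over vocabulary shards.) Let V ≥ 1, let ℓ ∈ ℝ^V, and let S_0, …, S_{n-1} be a partition of {1, …, V} into nonempty shards with shard log-masses L_k = log Σ_{j∈S_k} exp(ℓ_j). Let Z_0, …, Z_{n-1}, γ_0, …, γ_{n-1} be mutually independent random variables such that each Z_k is distributed according to the softmax of ℓ restricted to S_k and each γ_k is distributed as Gumbel(0,1). Let K = argmax_k (L_k + γ_k) (unique almost surely). Then Z_K is distributed according to softmax(ℓ); that is, for every i ∈ {1, …, V}, P(Z_K = i) = exp(ℓ_i) / Σ_{j=1}^V exp(ℓ_j). -/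
open MeasureTheory

lemma gumbel_map_uniform (G : Measure ℝ) [IsProbabilityMeasure G]
    (hG : ∀ t : ℝ, G (Set.Iic t) = ENNReal.ofReal (Real.exp (-Real.exp (-t)))) :
    G.map (fun t => Real.exp (-Real.exp (-t))) = volume.restrict (Set.Ioc (0:ℝ) 1) := by
  have hm : Measurable (fun t : ℝ => Real.exp (-Real.exp (-t))) := by fun_prop
  haveI := Measure.isProbabilityMeasure_map (μ := G) hm.aemeasurable
  apply Measure.ext_of_Iic
  intro a
  rw [Measure.map_apply hm measurableSet_Iic, Measure.restrict_apply measurableSet_Iic]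
  rcases le_or_gt a 0 with h0 | h0
  · have h1 : (fun t : ℝ => Real.exp (-Real.exp (-t))) ⁻¹' Set.Iic a = ∅ := by
      ext t
      have := Real.exp_pos (-Real.exp (-t))
      simp only [Set.mem_preimage, Set.mem_Iic, Set.mem_empty_iff_false, iff_false, not_le]
      linarith
    have h2 : Set.Iic a ∩ Set.Ioc (0:ℝ) 1 = ∅ := by
      ext t
      simp only [Set.mem_inter_iff, Set.mem_Iic, Set.mem_Ioc, Set.mem_empty_iff_false, iff_false]
      rintro ⟨h, h', _⟩
      linarith
    rw [h1, h2]; simp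
  rcases le_or_gt 1 a with h1 | h1
  · have e1 : (fun t : ℝ => Real.exp (-Real.exp (-t))) ⁻¹' Set.Iic a = Set.univ := by
      ext t
      have : Real.exp (-Real.exp (-t)) ≤ 1 := by
        rw [Real.exp_le_one_iff]
        have := Real.exp_pos (-t)
        linarith
      simp only [Set.mem_preimage, Set.mem_Iic, Set.mem_univ, iff_true]
      linarith
    have e2 : Set.Iic a ∩ Set.Ioc (0:ℝ) 1 = Set.Ioc 0 1 := by
      ext t
      simp only [Set.mem_inter_iff, Set.mem_Iic, Set.mem_Ioc]
      constructor
      · exact fun h => h.2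
      · exact fun h => ⟨h.2.trans h1, h⟩
    rw [e1, e2]; simp
  · have hl : 0 < -Real.log a := by
      have := Real.log_neg h0 h1
      linarith
    have e1 : (fun t : ℝ => Real.exp (-Real.exp (-t))) ⁻¹' Set.Iic a
        = Set.Iic (-Real.log (-Real.log a)) := by
      ext t
      simp only [Set.mem_preimage, Set.mem_Iic]
      rw [← Real.le_log_iff_exp_le h0, neg_le, ← Real.log_le_iff_le_exp hl, le_neg]
    have e2 : Set.Iic a ∩ Set.Ioc (0:ℝ) 1 = Set.Ioc 0 a := by
      ext t
      simp only [Set.mem_inter_iff, Set.mem_Iic, Set.mem_Ioc]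
      constructor
      · exact fun h => ⟨h.2.1, h.1⟩
      · exact fun h => ⟨h.2, h.1, h.2.trans h1.le⟩
    rw [e1, e2, hG, Real.volume_Ioc, neg_neg, Real.exp_log hl, neg_neg, Real.exp_log h0, sub_zero]

lemma gumbel_Iio (G : Measure ℝ) [IsProbabilityMeasure G]
    (hG : ∀ t : ℝ, G (Set.Iic t) = ENNReal.ofReal (Real.exp (-Real.exp (-t)))) (a : ℝ) :
    G (Set.Iio a) = ENNReal.ofReal (Real.exp (-Real.exp (-a))) := by
  have hm : Measurable (fun t : ℝ => Real.exp (-Real.exp (-t))) := by fun_prop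
  have h0 : G {a} = 0 := by
    have h1 : G.map (fun t => Real.exp (-Real.exp (-t))) {Real.exp (-Real.exp (-a))} = 0 := by
      rw [gumbel_map_uniform G hG]; simp
    rw [Measure.map_apply hm (measurableSet_singleton _)] at h1
    refine measure_mono_null ?_ h1
    rintro x rfl
    simp
  rw [← hG, ← Set.Iio_union_right, ]
  refine le_antisymm (measure_mono Set.subset_union_left) ?_
  refine (measure_union_le _ _).trans ?_
  rw [h0, add_zero]

lemma lintegral_uniform_rpow (c : ℝ) (hc : 0 ≤ c) :
    ∫⁻ u in Set.Ioc (0:ℝ) 1, ENNReal.ofReal (u ^ c) = ENNReal.ofReal (1 / (1 + c)) := by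
  have hi : IntervalIntegrable (fun u : ℝ => u ^ c) volume 0 1 :=
    intervalIntegral.intervalIntegrable_rpow (Or.inl hc)
  rw [← ofReal_integral_eq_lintegral_ofReal]
  · rw [← intervalIntegral.integral_of_le zero_le_one, integral_rpow (Or.inl (by linarith))]
    rw [Real.one_rpow, Real.zero_rpow (by linarith), sub_zero, add_comm]
  · exact (intervalIntegrable_iff_integrableOn_Ioc_of_le zero_le_one).1 hi
  · filter_upwards [ae_restrict_mem measurableSet_Ioc] with u hu
    exact Real.rpow_nonneg hu.1.le _

lemma gumbel_argmax {m : ℕ} (G : Measure ℝ) [IsProbabilityMeasure G]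
    (hG : ∀ t : ℝ, G (Set.Iic t) = ENNReal.ofReal (Real.exp (-Real.exp (-t))))
    (L : Fin (m+1) → ℝ) (k : Fin (m+1)) :
    Measure.pi (fun _ : Fin (m+1) => G) {x | ∀ s, s ≠ k → L s + x s < L k + x k}
      = ENNReal.ofReal (Real.exp (L k) / ∑ s, Real.exp (L s)) := by
  have hmp := measurePreserving_piFinSuccAbove (fun _ : Fin (m+1) => G) k
  let B : Set (ℝ × (Fin m → ℝ)) := ⋂ j : Fin m, {p | L (k.succAbove j) + p.2 j < L k + p.1}
  have hB : MeasurableSet B := by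
    refine MeasurableSet.iInter fun j => measurableSet_lt (by fun_prop) (by fun_prop)
  have hpre : {x : Fin (m+1) → ℝ | ∀ s, s ≠ k → L s + x s < L k + x k}
      = (MeasurableEquiv.piFinSuccAbove (fun _ : Fin (m+1) => ℝ) k) ⁻¹' B := by
    ext x
    simp only [Set.mem_setOf_eq, Set.mem_preimage, B, Set.mem_iInter]
    rw [Fin.forall_iff_succAbove k]
    simp [Fin.succAbove_ne, MeasurableEquiv.piFinSuccAbove, Fin.insertNthEquiv, Fin.removeNth]
  rw [hpre, hmp.measure_preimage hB.nullMeasurableSet, Measure.prod_apply hB]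
  set c : ℝ := ∑ j : Fin m, Real.exp (L (k.succAbove j) - L k) with hc
  have hc0 : 0 ≤ c := Finset.sum_nonneg fun _ _ => (Real.exp_pos _).le
  have hm : Measurable (fun t : ℝ => Real.exp (-Real.exp (-t))) := by fun_prop
  have hint : ∀ t : ℝ, Measure.pi (fun _ : Fin m => G) (Prod.mk t ⁻¹' B)
      = ENNReal.ofReal ((Real.exp (-Real.exp (-t))) ^ c) := by
    intro t
    have : Prod.mk t ⁻¹' B = Set.univ.pi fun j => Set.Iio (L k + t - L (k.succAbove j)) := by
      ext y
      simp only [Set.mem_preimage, B, Set.mem_iInter, Set.mem_setOf_eq, Set.mem_pi, Set.mem_univ,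
        forall_true_left, Set.mem_Iio, lt_sub_iff_add_lt']
    rw [this, Measure.pi_pi]
    simp only [gumbel_Iio G hG]
    rw [← ENNReal.ofReal_prod_of_nonneg (fun _ _ => (Real.exp_pos _).le), ← Real.exp_sum,
      ← Real.exp_mul, hc, Finset.mul_sum]
    congr 2
    refine Finset.sum_congr rfl fun j _ => ?_
    rw [neg_mul, ← Real.exp_add]
    congr 2
    ring
  simp only [hint]
  have h2 : ∫⁻ t, ENNReal.ofReal ((Real.exp (-Real.exp (-t))) ^ c) ∂G
      = ∫⁻ u, ENNReal.ofReal (u ^ c) ∂(G.map (fun t => Real.exp (-Real.exp (-t)))) := by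
    rw [lintegral_map (by fun_prop) hm]
  rw [h2, gumbel_map_uniform G hG, lintegral_uniform_rpow c hc0]
  congr 1
  rw [Fin.sum_univ_succAbove _ k, hc]
  simp only [Real.exp_sub, ← Finset.sum_div]
  have := Real.exp_pos (L k)
  field_simp

lemma marginal_indep {Ω : Type*} [MeasurableSpace Ω] {P : Measure Ω} [IsProbabilityMeasure P]
    {V n : ℕ} (Z : Fin n → Ω → Fin V) (hZmeas : ∀ k, Measurable (Z k))
    (γ : Fin n → Ω → ℝ) (hγmeas : ∀ k, Measurable (γ k))
    (hindep : ∀ (z : Fin n → Fin V) (t : Fin n → ℝ),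
      P {ω | (∀ k, Z k ω = z k) ∧ ∀ k, γ k ω ≤ t k}
        = (∏ k : Fin n, P {ω | Z k ω = z k}) * ∏ k : Fin n, P {ω | γ k ω ≤ t k})
    (k : Fin n) (i : Fin V) (t : Fin n → ℝ) :
    P ({ω | Z k ω = i} ∩ {ω | ∀ s, γ s ω ≤ t s})
      = P {ω | Z k ω = i} * ∏ s : Fin n, P {ω | γ s ω ≤ t s} := by
  classical
  let T : Fin n → Finset (Fin V) := fun s => if s = k then {i} else Finset.univ
  have hset : ({ω | Z k ω = i} ∩ {ω | ∀ s, γ s ω ≤ t s})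
      = ⋃ z ∈ Fintype.piFinset T, {ω | (∀ k, Z k ω = z k) ∧ ∀ k, γ k ω ≤ t k} := by
    ext ω
    simp only [Set.mem_inter_iff, Set.mem_setOf_eq, Set.mem_iUnion, Fintype.mem_piFinset,
      exists_prop, T]
    constructor
    · rintro ⟨h1, h2⟩
      refine ⟨fun s => Z s ω, fun s => ?_, fun _ => rfl, h2⟩
      by_cases hs : s = k
      · subst hs; simp [h1]
      · simp [hs]
    · rintro ⟨z, hz, h1, h2⟩
      refine ⟨?_, h2⟩
      have := hz k
      rw [h1 k]
      simpa using this
  rw [hset, measure_biUnion_finset]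
  · simp only [hindep]
    rw [← Finset.sum_mul, ← Finset.prod_univ_sum T (fun k j => P {ω | Z k ω = j})]
    congr 1
    rw [Finset.prod_eq_single k]
    · simp [T]
    · intro s _ hs
      simp only [T, hs, if_false]
      have := sum_measure_preimage_singleton (μ := P) (f := Z s) Finset.univ
        (fun y _ => hZmeas s (measurableSet_singleton y))
      have h3 : ∀ y, P {ω | Z s ω = y} = P (Z s ⁻¹' {y}) := fun y => rfl
      simp only [h3, this]
      simp
    · simp
  · intro z _ z' _ hne
    refine Set.disjoint_left.2 fun ω h h' => hne ?_
    funext s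
    rw [← h.1 s, h'.1 s]
  · intro z _
    have h4 : {ω | (∀ k, Z k ω = z k) ∧ ∀ k, γ k ω ≤ t k}
        = (⋂ s, Z s ⁻¹' {z s}) ∩ (⋂ s, γ s ⁻¹' Set.Iic (t s)) := by
      ext ω
      simp
    rw [h4]
    exact (MeasurableSet.iInter fun s => hZmeas s (measurableSet_singleton _)).inter
      (MeasurableSet.iInter fun s => hγmeas s measurableSet_Iic)

lemma joint_pi {Ω : Type*} [MeasurableSpace Ω] {P : Measure Ω} [IsProbabilityMeasure P]
    {n : ℕ} (γ : Fin n → Ω → ℝ) (hγmeas : ∀ k, Measurable (γ k))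
    (E : Set Ω) (hE : P E ≠ 0) (G : Measure ℝ) [IsProbabilityMeasure G]
    (hind : ∀ t : Fin n → ℝ, P (E ∩ {ω | ∀ s, γ s ω ≤ t s}) = P E * ∏ s : Fin n, G (Set.Iic (t s)))
    (A : Set (Fin n → ℝ)) (hA : MeasurableSet A) :
    P (E ∩ {ω | (fun s => γ s ω) ∈ A}) = P E * Measure.pi (fun _ : Fin n => G) A := by
  have hm : Measurable (fun ω s => γ s ω) := measurable_pi_lambda _ hγmeas
  have hpi : Measure.pi (fun _ : Fin n => G)
      = (P E)⁻¹ • (P.restrict E).map (fun ω s => γ s ω) := by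
    refine Measure.pi_eq_generateFrom (C := fun _ => Set.range Set.Iic) ?_ ?_ ?_ ?_
    · intro _
      rw [← borel_eq_generateFrom_Iic]
      exact (BorelSpace.measurable_eq).symm
    · exact fun _ => isPiSystem_Iic
    · exact fun _ => ⟨fun N => Set.Iic (N : ℝ), fun N => ⟨_, rfl⟩, fun N => measure_lt_top _ _, by
        ext x
        simpa using exists_nat_ge x⟩
    · intro s hs
      choose t ht using hs
      obtain rfl : (fun j => Set.Iic (t j)) = s := funext ht
      have hms : MeasurableSet (Set.univ.pi fun j => Set.Iic (t j)) :=
        MeasurableSet.univ_pi fun _ => measurableSet_Iic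
      rw [Measure.smul_apply, Measure.map_apply hm hms, Measure.restrict_apply (hm hms),
        Set.inter_comm]
      have : ((fun ω s => γ s ω) ⁻¹' (Set.univ.pi fun j => Set.Iic (t j)))
          = {ω | ∀ s, γ s ω ≤ t s} := by
        ext; simp [Pi.le_def]
      rw [this, hind, smul_eq_mul, ← mul_assoc, ENNReal.inv_mul_cancel hE (measure_ne_top _ _),
        one_mul]
  rw [hpi, Measure.smul_apply, Measure.map_apply hm hA, Measure.restrict_apply (hm hA), smul_eq_mul,
    ← mul_assoc, ENNReal.mul_inv_cancel hE (measure_ne_top _ _), one_mul, Set.inter_comm]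
  rfl



/-- **Distributed sampling over vocabulary shards.** Let `S 0, …, S (n-1)` be a
partition of the index set into nonempty shards with log-masses
`L k = log ∑ j ∈ S k, exp (ℓ j)`. Let `Z 0, …, Z (n-1)` (each distributed as the
softmax of `ℓ` restricted to `S k`) and `γ 0, …, γ (n-1)` (each standard Gumbel, CDF
`t ↦ exp (-exp (-t))`) be mutually independent (independence expressed by the product
rule on point events for the `Z k` and rays for the `γ k`, which characterizes mutual
independence here). Let `K = argmax_k (L k + γ k)` (unique almost surely). Then `Z K`
is distributed according to `softmax ℓ`. -/
theorem distributed_shard_sampling_exact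
    {Ω : Type*} [MeasurableSpace Ω] {P : Measure Ω} [IsProbabilityMeasure P]
    {V n : ℕ} (hV : 1 ≤ V) (ℓ : Fin V → ℝ)
    (S : Fin n → Finset (Fin V)) (hSne : ∀ k, (S k).Nonempty)
    (hSdisj : Pairwise fun k l => Disjoint (S k) (S l))
    (hScover : ∀ i : Fin V, ∃ k, i ∈ S k)
    (L : Fin n → ℝ) (hL : ∀ k, L k = Real.log (∑ j ∈ S k, Real.exp (ℓ j)))
    (Z : Fin n → Ω → Fin V) (hZmeas : ∀ k, Measurable (Z k))
    (γ : Fin n → Ω → ℝ) (hγmeas : ∀ k, Measurable (γ k))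
    (hZlaw : ∀ k, ∀ i : Fin V, P {ω | Z k ω = i}
      = if i ∈ S k then ENNReal.ofReal (Real.exp (ℓ i) / ∑ j ∈ S k, Real.exp (ℓ j)) else 0)
    (hγlaw : ∀ k, ∀ t : ℝ, P {ω | γ k ω ≤ t} = ENNReal.ofReal (Real.exp (-Real.exp (-t))))
    (hindep : ∀ (z : Fin n → Fin V) (t : Fin n → ℝ),
      P {ω | (∀ k, Z k ω = z k) ∧ ∀ k, γ k ω ≤ t k}
        = (∏ k : Fin n, P {ω | Z k ω = z k}) * ∏ k : Fin n, P {ω | γ k ω ≤ t k})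
    (K : Ω → Fin n) (hKmeas : Measurable K)
    (hK : ∀ᵐ ω ∂P, ∀ s : Fin n, s ≠ K ω → L s + γ s ω < L (K ω) + γ (K ω) ω) :
    ∀ i : Fin V, P {ω | Z (K ω) ω = i}
      = ENNReal.ofReal (Real.exp (ℓ i) / ∑ j : Fin V, Real.exp (ℓ j)) := by
  intro i
  classical
  obtain ⟨k, hk⟩ := hScover i
  cases n with
  | zero => exact k.elim0
  | succ m =>
  have hSpos : ∀ s, 0 < ∑ j ∈ S s, Real.exp (ℓ j) :=
    fun s => Finset.sum_pos (fun _ _ => Real.exp_pos _) (hSne s)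
  have hexpL : ∀ s, Real.exp (L s) = ∑ j ∈ S s, Real.exp (ℓ j) := fun s => by
    rw [hL, Real.exp_log (hSpos s)]
  have htot : ∑ s, Real.exp (L s) = ∑ j : Fin V, Real.exp (ℓ j) := by
    simp only [hexpL]
    rw [← Finset.sum_biUnion (fun a _ b _ hab => hSdisj hab)]
    congr 1
    ext j
    simpa using hScover j
  let G := P.map (γ k)
  haveI : IsProbabilityMeasure G := Measure.isProbabilityMeasure_map (hγmeas k).aemeasurable
  have hG : ∀ t : ℝ, G (Set.Iic t) = ENNReal.ofReal (Real.exp (-Real.exp (-t))) := by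
    intro t
    rw [Measure.map_apply (hγmeas k) measurableSet_Iic]
    exact hγlaw k t
  have hPk : P {ω | Z k ω = i} = ENNReal.ofReal (Real.exp (ℓ i) / Real.exp (L k)) := by
    rw [hZlaw, if_pos hk, hexpL]
  have hE : P {ω | Z k ω = i} ≠ 0 := by
    rw [hPk]
    exact (ENNReal.ofReal_pos.2 (by positivity)).ne'
  let A : Set (Fin (m+1) → ℝ) := {x | ∀ s, s ≠ k → L s + x s < L k + x k}
  have hA : MeasurableSet A := by
    have : A = ⋂ s, ⋂ (_ : s ≠ k), {x | L s + x s < L k + x k} := by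
      ext; simp [A]
    rw [this]
    exact MeasurableSet.iInter fun s => MeasurableSet.iInter fun _ =>
      measurableSet_lt (by fun_prop) (by fun_prop)
  have hZS : ∀ᵐ ω ∂P, ∀ s, Z s ω ∈ S s := by
    rw [ae_all_iff]
    intro s
    have h1 : ∀ᵐ ω ∂P, ∀ j, j ∉ S s → Z s ω ≠ j := by
      rw [ae_all_iff]
      intro j
      by_cases hj : j ∈ S s
      · simp [hj]
      · have h2 := hZlaw s j
        rw [if_neg hj] at h2
        have h3 : ∀ᵐ ω ∂P, Z s ω ≠ j := by
          rw [ae_iff]; simpa using h2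
        filter_upwards [h3] with ω h _ using h
    filter_upwards [h1] with ω h
    by_contra hc
    exact h _ hc rfl
  have hae : P {ω | Z (K ω) ω = i} = P ({ω | Z k ω = i} ∩ {ω | (fun s => γ s ω) ∈ A}) := by
    apply measure_congr
    filter_upwards [hK, hZS] with ω h1 h2
    apply propext
    change Z (K ω) ω = i ↔ (Z k ω = i ∧ ∀ s, s ≠ k → L s + γ s ω < L k + γ k ω)
    constructor
    · intro h
      have hKk : K ω = k := by
        by_contra hne
        have h3 := h2 (K ω)
        rw [h] at h3
        exact Finset.disjoint_left.1 (hSdisj hne) h3 hk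
      rw [hKk] at h h1
      exact ⟨h, h1⟩
    · rintro ⟨h, h'⟩
      have hKk : K ω = k := by
        by_contra hne
        exact lt_asymm (h' _ hne) (h1 k (Ne.symm hne))
      rw [hKk]; exact h
  rw [hae, joint_pi γ hγmeas _ hE G ?_ A hA, gumbel_argmax G hG L k, hPk, htot,
    ← ENNReal.ofReal_mul (by positivity)]
  · congr 1
    have := Real.exp_pos (L k)
    field_simp
  · intro t
    rw [marginal_indep Z hZmeas γ hγmeas hindep k i t]
    simp only [hγlaw, hG]
end
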